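/- Let n ≥ 2, α > 1, and 1 ≤ s < ∞ with (α − 1)(s − n + 1) ≥ n, and let Ω_α = {(x, y₁, …, y_{n−1}) ∈ ℝⁿ : 0 < x < 1, (y₁² + ⋯ + y_{n−1}²)^{1/2} < x^α}. Then for every point z₀ ∈ Ω_α, ∫_{Ω_α} k(z, z₀; Ω_α)^s dz = ∞. -/

import Mathlib

/-!
If `u` is differentiable on `Ω` with `‖∇u‖ ≤ 1 / d(·, ∂Ω)`, integrating the derivative of `u` along
curves gives `u z₀ - u z ≤ k(z, z₀; Ω)`. In a solid of revolution `{|y| < φ x}` the distance to the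
boundary is at most `φ x`, so every primitive of `1 / φ`, as a function of `x`, is such a `u`.
For `φ x = x ^ α` this yields `k(z, z₀) ≥ c x ^ (1 - α)` near the tip. The section of the cusp at
height `x` has measure proportional to `x ^ (α (n - 1))`, so the integral dominates a multiple of
`∫ x ^ ((1 - α) s + α (n - 1)) dx`, which diverges at `0` because the exponent is at most `-1`.
-/

open MeasureTheory Metric Set
open scoped ENNReal

/-- The quasihyperbolic distance `k(z, z₀; Ω)`: the infimum, over all Lipschitz curves
`γ : [0,1] → Ω` joining `z` to `z₀`, of `∫ ‖γ'(t)‖ / d(γ(t), ∂Ω) dt`. -/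
noncomputable def qhDist {n : ℕ} (Ω : Set (EuclideanSpace ℝ (Fin n)))
    (z z₀ : EuclideanSpace ℝ (Fin n)) : ℝ :=
  sInf {L : ℝ | ∃ γ : ℝ → EuclideanSpace ℝ (Fin n),
    (∃ K : NNReal, LipschitzWith K γ) ∧ γ 0 = z ∧ γ 1 = z₀ ∧
    (∀ t ∈ Set.Icc (0:ℝ) 1, γ t ∈ Ω) ∧
    L = ∫ t in (0:ℝ)..1, ‖deriv γ t‖ / Metric.infDist (γ t) (frontier Ω)}

/-- The distance of `z` from the first coordinate axis. -/
noncomputable def radial {n : ℕ} [NeZero n] (z : EuclideanSpace ℝ (Fin n)) : ℝ :=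
  Real.sqrt (∑ i ∈ Finset.univ.erase (0 : Fin n), z i ^ 2)

/-- The cusp domain `Ω_α = {0 < x < 1, |y| < x^α} ⊆ ℝⁿ`. -/
noncomputable def cuspDomain (n : ℕ) [NeZero n] (α : ℝ) : Set (EuclideanSpace ℝ (Fin n)) :=
  {z | 0 < z 0 ∧ z 0 < 1 ∧ radial z < (z 0) ^ α}

open Module (finrank)
open Filter Topology

section LocallyLipschitz

variable {E F : Type*} [NormedAddCommGroup E] [NormedSpace ℝ E]
  [NormedAddCommGroup F] [NormedSpace ℝ F]

lemma locallyLipschitzOn_of_norm_fderiv_le {f : E → F} {g : E → ℝ} {s : Set E} (hs : IsOpen s)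
    (hf : DifferentiableOn ℝ f s) (hg : ContinuousOn g s) (hfg : ∀ x ∈ s, ‖fderiv ℝ f x‖ ≤ g x) :
    LocallyLipschitzOn s f := by
  intro x hx
  have hnear : ∀ᶠ y in 𝓝 x, y ∈ s ∧ g y < g x + 1 :=
    (hs.eventually_mem hx).and
      ((hg.continuousAt (hs.mem_nhds hx)).eventually_lt continuousAt_const (lt_add_one _))
  obtain ⟨ε, hε, hball⟩ := Metric.eventually_nhds_iff_ball.1 hnear
  refine ⟨(g x + 1).toNNReal, ball x ε, mem_nhdsWithin_of_mem_nhds (ball_mem_nhds x hε), ?_⟩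
  refine (convex_ball x ε).lipschitzOnWith_of_nnnorm_fderiv_le (𝕜 := ℝ)
    (fun y hy => hf.differentiableAt (hs.mem_nhds (hball y hy).1)) fun y hy => ?_
  exact NNReal.le_toNNReal_of_coe_le ((hfg y (hball y hy).1).trans (hball y hy).2.le)

end LocallyLipschitz

section LipschitzCurve

/-- `γ` is a Lipschitz curve from `z` to `w` that stays in `Ω` for times in `[0, 1]`. As in the
definition of `qhDist`, it is Lipschitz on the whole real line. -/
structure IsLipschitzCurveIn {E : Type*} [PseudoEMetricSpace E] (Ω : Set E) (z w : E)
    (γ : ℝ → E) : Prop where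
  lipschitz : ∃ K, LipschitzWith K γ
  source : γ 0 = z
  target : γ 1 = w
  mem : ∀ t ∈ Icc (0 : ℝ) 1, γ t ∈ Ω

variable {E F : Type*} [NormedAddCommGroup E] [NormedSpace ℝ E]
  [NormedAddCommGroup F] [NormedSpace ℝ F]

lemma exists_isLipschitzCurveIn_image {Φ : E → F} {C : Set E} (hC : Convex ℝ C)
    (hΦ : ContDiffOn ℝ 1 Φ C) {z w : E} (hz : z ∈ C) (hw : w ∈ C) :
    ∃ γ, IsLipschitzCurveIn (Φ '' C) (Φ z) (Φ w) γ := by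
  have hmem : MapsTo (AffineMap.lineMap z w : ℝ → E) (Icc 0 1) C := fun t ht =>
    hC.lineMap_mem hz hw ht
  have hsmooth : ContDiffOn ℝ 1 (Φ ∘ AffineMap.lineMap z w) (Icc (0 : ℝ) 1) :=
    hΦ.comp (AffineMap.contDiff_lineMap z w).contDiffOn hmem
  obtain ⟨K, hK⟩ := hsmooth.exists_lipschitzOnWith one_ne_zero (convex_Icc 0 1) isCompact_Icc
  refine ⟨IccExtend zero_le_one ((Icc 0 1).domRestrict (Φ ∘ AffineMap.lineMap z w)),
    ⟨_, hK.to_restrict.comp (.projIcc zero_le_one)⟩,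
    by simp [domRestrict], by simp [domRestrict], fun t _ => ?_⟩
  exact mem_image_of_mem Φ (hmem (projIcc 0 1 zero_le_one t).2)

end LipschitzCurve

section FrontierDistance

variable {E : Type*} [NormedAddCommGroup E] [NormedSpace ℝ E] {Ω : Set E} {z w : E}

lemma infDist_frontier_pos (hΩ : IsOpen Ω) (hΩ' : Ω ≠ univ) (hz : z ∈ Ω) :
    0 < infDist z (frontier Ω) := by
  rw [← isClosed_frontier.notMem_iff_infDist_pos (nonempty_frontier_iff.2 ⟨⟨z, hz⟩, hΩ'⟩),
    hΩ.frontier_eq]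
  exact fun h => h.2 hz

lemma infDist_frontier_le_dist [FiniteDimensional ℝ E] (hz : z ∈ Ω) (hw : w ∉ Ω) :
    infDist z (frontier Ω) ≤ dist z w := by
  obtain ⟨y, hy, hzy⟩ :=
    exists_mem_frontier_infDist_compl_eq_dist hz ((ne_univ_iff_exists_notMem Ω).2 ⟨w, hw⟩)
  calc infDist z (frontier Ω) ≤ dist z y := infDist_le_dist_of_mem hy
    _ = infDist z Ωᶜ := hzy.symm
    _ ≤ dist z w := infDist_le_dist_of_mem hw

end FrontierDistance

section QuasihyperbolicLength

variable {E : Type*} [NormedAddCommGroup E] [NormedSpace ℝ E]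

/-- The quasihyperbolic length in `Ω` of the restriction of the curve `γ` to `[0, 1]`. -/
noncomputable def qhLength (Ω : Set E) (γ : ℝ → E) : ℝ :=
  ∫ t in (0 : ℝ)..1, ‖deriv γ t‖ / infDist (γ t) (frontier Ω)

variable [FiniteDimensional ℝ E] {Ω : Set E} {z w : E} {γ : ℝ → E}

lemma IsLipschitzCurveIn.intervalIntegrable_qhLength (hΩ : IsOpen Ω) (hΩ' : Ω ≠ univ)
    (hγ : IsLipschitzCurveIn Ω z w γ) :
    IntervalIntegrable (fun t => ‖deriv γ t‖ / infDist (γ t) (frontier Ω)) volume 0 1 := by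
  obtain ⟨K, hK⟩ := hγ.lipschitz
  have hcont : Continuous fun t => infDist (γ t) (frontier Ω) :=
    (continuous_infDist_pt _).comp hK.continuous
  obtain ⟨t₀, ht₀, hmin⟩ :=
    isCompact_Icc.exists_isMinOn (nonempty_Icc.2 zero_le_one) hcont.continuousOn
  borelize E
  rw [intervalIntegrable_iff_integrableOn_Icc_of_le zero_le_one]
  refine Measure.integrableOn_of_bounded (M := K / infDist (γ t₀) (frontier Ω)) (by simp)
    ((measurable_deriv γ).norm.div hcont.measurable).aestronglyMeasurable ?_
  filter_upwards [ae_restrict_mem measurableSet_Icc] with t ht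
  rw [Real.norm_of_nonneg (div_nonneg (norm_nonneg _) infDist_nonneg)]
  exact div_le_div₀ K.2 (norm_deriv_le_of_lipschitz hK)
    (infDist_frontier_pos hΩ hΩ' (hγ.mem t₀ ht₀)) (hmin ht)

theorem IsLipschitzCurveIn.sub_le_qhLength {u : E → ℝ} (hΩ : IsOpen Ω) (hΩ' : Ω ≠ univ)
    (hu : DifferentiableOn ℝ u Ω) (hgrad : ∀ x ∈ Ω, ‖fderiv ℝ u x‖ ≤ (infDist x (frontier Ω))⁻¹)
    (hγ : IsLipschitzCurveIn Ω z w γ) : u w - u z ≤ qhLength Ω γ := by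
  obtain ⟨K, hK⟩ := hγ.lipschitz
  have himage : γ '' Icc 0 1 ⊆ Ω := image_subset_iff.2 hγ.mem
  have huloc : LocallyLipschitzOn Ω u := locallyLipschitzOn_of_norm_fderiv_le hΩ hu
    ((continuous_infDist_pt _).continuousOn.inv₀ fun x hx =>
      (infDist_frontier_pos hΩ hΩ' hx).ne') hgrad
  obtain ⟨L, hL⟩ := (huloc.mono himage).exists_lipschitzOnWith_of_compact
    (isCompact_Icc.image hK.continuous)
  have hac : AbsolutelyContinuousOnInterval (u ∘ γ) 0 1 := by
    refine LipschitzOnWith.absolutelyContinuousOnInterval (K := L * K) ?_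
    rw [uIcc_of_le zero_le_one]
    exact hL.comp hK.lipschitzOnWith (mapsTo_image γ _)
  calc u w - u z = ∫ t in (0 : ℝ)..1, deriv (u ∘ γ) t := by
        rw [hac.integral_deriv_eq_sub, Function.comp_apply, Function.comp_apply, hγ.source,
          hγ.target]
    _ ≤ qhLength Ω γ := ?_
  refine intervalIntegral.integral_mono_ae_restrict zero_le_one hac.intervalIntegrable_deriv
    (hγ.intervalIntegrable_qhLength hΩ hΩ') ?_
  filter_upwards [ae_restrict_of_ae hK.ae_differentiableAt, ae_restrict_mem measurableSet_Icc]
    with t hγt ht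
  have hut : DifferentiableAt ℝ u (γ t) := hu.differentiableAt (hΩ.mem_nhds (hγ.mem t ht))
  calc deriv (u ∘ γ) t = fderiv ℝ u (γ t) (deriv γ t) := fderiv_comp_deriv t hut hγt
    _ ≤ ‖fderiv ℝ u (γ t)‖ * ‖deriv γ t‖ := (le_abs_self _).trans ((fderiv ℝ u (γ t)).le_opNorm _)
    _ ≤ (infDist (γ t) (frontier Ω))⁻¹ * ‖deriv γ t‖ := by gcongr; exact hgrad _ (hγ.mem t ht)
    _ = ‖deriv γ t‖ / infDist (γ t) (frontier Ω) := inv_mul_eq_div _ _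

end QuasihyperbolicLength

lemma qhDist_eq_sInf_image {n : ℕ} (Ω : Set (EuclideanSpace ℝ (Fin n)))
    (z w : EuclideanSpace ℝ (Fin n)) :
    qhDist Ω z w = sInf (qhLength Ω '' {γ | IsLipschitzCurveIn Ω z w γ}) := by
  refine congrArg sInf (ext fun L => ⟨?_, ?_⟩)
  · rintro ⟨γ, hlip, hsource, htarget, hmem, rfl⟩
    exact ⟨γ, ⟨hlip, hsource, htarget, hmem⟩, rfl⟩
  · rintro ⟨γ, ⟨hlip, hsource, htarget, hmem⟩, rfl⟩
    exact ⟨γ, hlip, hsource, htarget, hmem, rfl⟩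

theorem sub_le_qhDist {n : ℕ} {Ω : Set (EuclideanSpace ℝ (Fin n))}
    {u : EuclideanSpace ℝ (Fin n) → ℝ} {z w : EuclideanSpace ℝ (Fin n)} (hΩ : IsOpen Ω)
    (hΩ' : Ω ≠ univ) (hu : DifferentiableOn ℝ u Ω)
    (hgrad : ∀ x ∈ Ω, ‖fderiv ℝ u x‖ ≤ (infDist x (frontier Ω))⁻¹)
    (hjoin : ∃ γ, IsLipschitzCurveIn Ω z w γ) : u w - u z ≤ qhDist Ω z w := by
  rw [qhDist_eq_sInf_image]
  exact le_csInf (Nonempty.image _ hjoin)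
    (forall_mem_image.2 fun γ hγ => hγ.sub_le_qhLength hΩ hΩ' hu hgrad)

section SolidOfRevolution

variable {n : ℕ} [NeZero n]

/-- The coordinates of `z` other than the one along the axis of revolution, as a vector whose norm
is `radial z`. -/
def offAxis : EuclideanSpace ℝ (Fin n) →ₗ[ℝ] EuclideanSpace ℝ {i : Fin n // i ≠ 0} where
  toFun z := WithLp.toLp 2 fun i => z i
  map_add' _ _ := rfl
  map_smul' _ _ := rfl

@[simp]
lemma offAxis_apply (z : EuclideanSpace ℝ (Fin n)) (i : {i : Fin n // i ≠ 0}) :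
    offAxis z i = z i :=
  rfl

lemma radial_eq_norm_offAxis (z : EuclideanSpace ℝ (Fin n)) : radial z = ‖offAxis z‖ := by
  have hsum : ∑ i ∈ Finset.univ.erase 0, z i ^ 2 = ∑ i : {i : Fin n // i ≠ 0}, z i ^ 2 :=
    Finset.sum_subtype _ (by simp) _
  simp [radial, hsum, EuclideanSpace.norm_eq]

lemma continuous_radial : Continuous (radial : EuclideanSpace ℝ (Fin n) → ℝ) := by
  unfold radial
  fun_prop

lemma convexOn_radial : ConvexOn ℝ univ (radial : EuclideanSpace ℝ (Fin n) → ℝ) :=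
  (convexOn_univ_norm.comp_linearMap offAxis).congr fun z _ => (radial_eq_norm_offAxis z).symm

lemma abs_apply_le_radial {i : Fin n} (hi : i ≠ 0) (z : EuclideanSpace ℝ (Fin n)) :
    |z i| ≤ radial z := by
  rw [radial_eq_norm_offAxis]
  exact PiLp.norm_apply_le (offAxis z) ⟨i, hi⟩

variable (n) in
/-- The solid of revolution with profile `φ` over the set `I` of the first coordinate axis. -/
def solidOfRevolution (I : Set ℝ) (φ : ℝ → ℝ) : Set (EuclideanSpace ℝ (Fin n)) :=
  {z | z 0 ∈ I ∧ radial z < φ (z 0)}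

variable {I J : Set ℝ} {φ F : ℝ → ℝ} {z w : EuclideanSpace ℝ (Fin n)}

lemma solidOfRevolution_mono (hIJ : I ⊆ J) : solidOfRevolution n I φ ⊆ solidOfRevolution n J φ :=
  fun _ hz => ⟨hIJ hz.1, hz.2⟩

lemma isOpen_solidOfRevolution (hI : IsOpen I) (hφ : ContinuousOn φ I) :
    IsOpen (solidOfRevolution n I φ) := by
  have hcoord : Continuous fun z : EuclideanSpace ℝ (Fin n) => z 0 := by fun_prop
  have hslab : IsOpen {z : EuclideanSpace ℝ (Fin n) | z 0 ∈ I} := hI.preimage hcoord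
  refine isOpen_iff_eventually.2 fun z hz => (hslab.eventually_mem hz.1).and ?_
  exact continuous_radial.continuousAt.eventually_lt
    (ContinuousAt.comp (f := fun w : EuclideanSpace ℝ (Fin n) => w 0)
      (hφ.continuousAt (hI.mem_nhds hz.1)) hcoord.continuousAt) hz.2

lemma exists_notMem_solidOfRevolution_dist_eq (hn : 2 ≤ n) (hz : 0 ≤ φ (z 0)) :
    ∃ w ∉ solidOfRevolution n I φ, dist z w = φ (z 0) := by
  obtain ⟨i, hi⟩ : ∃ i : Fin n, i ≠ 0 :=
    have : Nontrivial (Fin n) := Fin.nontrivial_iff_two_le.2 hn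
    exists_ne 0
  obtain ⟨t, ht, hzt⟩ : ∃ t, |t| = φ (z 0) ∧ φ (z 0) ≤ |z i + t| := by
    rcases le_total 0 (z i) with h | h
    · exact ⟨φ (z 0), abs_of_nonneg hz, (le_add_of_nonneg_left h).trans (le_abs_self _)⟩
    · exact ⟨-φ (z 0), by rw [abs_neg, abs_of_nonneg hz], by
        rw [abs_of_nonpos (by linarith)]; linarith⟩
  refine ⟨z + EuclideanSpace.single i t, fun hmem => ?_, by simp [dist_eq_norm, ht]⟩
  have hlt := (abs_apply_le_radial hi _).trans_lt hmem.2
  simp only [PiLp.add_apply, PiLp.single_apply, if_pos, if_neg hi.symm, add_zero] at hlt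
  exact hlt.not_ge hzt

lemma solidOfRevolution_ne_univ (hn : 2 ≤ n) (hz : 0 ≤ φ (z 0)) :
    solidOfRevolution n I φ ≠ univ := by
  obtain ⟨w, hw, -⟩ := exists_notMem_solidOfRevolution_dist_eq (I := I) hn hz
  exact (ne_univ_iff_exists_notMem _).2 ⟨w, hw⟩

lemma infDist_frontier_solidOfRevolution_le (hn : 2 ≤ n) (hz : z ∈ solidOfRevolution n I φ) :
    infDist z (frontier (solidOfRevolution n I φ)) ≤ φ (z 0) := by
  obtain ⟨w, hw, hzw⟩ := exists_notMem_solidOfRevolution_dist_eq (I := I) hn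
    ((Real.sqrt_nonneg _).trans hz.2.le)
  exact (infDist_frontier_le_dist hz hw).trans_eq hzw

/-- The map multiplying the section at height `x` of a solid of revolution by `φ x`; it carries the
cylinder `|y| < 1` to the solid with profile `φ`. -/
def stretch (φ : ℝ → ℝ) (z : EuclideanSpace ℝ (Fin n)) : EuclideanSpace ℝ (Fin n) :=
  WithLp.toLp 2 fun i => if i = 0 then z 0 else φ (z 0) * z i

lemma stretch_apply_zero (φ : ℝ → ℝ) (z : EuclideanSpace ℝ (Fin n)) : stretch φ z 0 = z 0 := by
  simp [stretch]

lemma stretch_apply_of_ne {i : Fin n} (hi : i ≠ 0) (φ : ℝ → ℝ) (z : EuclideanSpace ℝ (Fin n)) :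
    stretch φ z i = φ (z 0) * z i :=
  if_neg hi

lemma radial_stretch (φ : ℝ → ℝ) (z : EuclideanSpace ℝ (Fin n)) :
    radial (stretch φ z) = |φ (z 0)| * radial z := by
  have hoff : offAxis (stretch φ z) = φ (z 0) • offAxis z :=
    PiLp.ext fun i => stretch_apply_of_ne i.2 φ z
  rw [radial_eq_norm_offAxis, radial_eq_norm_offAxis, hoff, norm_smul, Real.norm_eq_abs]

lemma contDiffOn_stretch (hφ : ContDiffOn ℝ 1 φ I) :
    ContDiffOn ℝ 1 (stretch φ) {z : EuclideanSpace ℝ (Fin n) | z 0 ∈ I} := by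
  have hcoord (i : Fin n) : ContDiff ℝ 1 fun z : EuclideanSpace ℝ (Fin n) => z i := by fun_prop
  refine contDiffOn_euclidean.2 fun i => ?_
  rcases eq_or_ne i 0 with rfl | hi
  · simpa only [stretch_apply_zero] using (hcoord 0).contDiffOn
  · simp only [stretch_apply_of_ne hi]
    exact (hφ.comp (hcoord 0).contDiffOn fun _ hz => hz).mul (hcoord i).contDiffOn

lemma stretch_image_cylinder (hφ : ∀ x ∈ I, 0 < φ x) :
    stretch φ '' solidOfRevolution n I 1 = solidOfRevolution n I φ := by
  refine Subset.antisymm ?_ fun z hz => ?_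
  · rintro _ ⟨z, ⟨hzI, hz⟩, rfl⟩
    refine ⟨by rwa [stretch_apply_zero], ?_⟩
    rw [radial_stretch, stretch_apply_zero, abs_of_pos (hφ _ hzI)]
    exact mul_lt_of_lt_one_right (hφ _ hzI) hz
  · have hpos := hφ _ hz.1
    refine ⟨stretch φ⁻¹ z, ⟨by rw [stretch_apply_zero]; exact hz.1, ?_⟩, PiLp.ext fun i => ?_⟩
    · rw [radial_stretch, Pi.inv_apply, abs_of_pos (inv_pos.2 hpos), Pi.one_apply,
        inv_mul_lt_one₀ hpos]
      exact hz.2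
    · rcases eq_or_ne i 0 with rfl | hi
      · rw [stretch_apply_zero, stretch_apply_zero]
      · rw [stretch_apply_of_ne hi, stretch_apply_of_ne hi, stretch_apply_zero, Pi.inv_apply,
          mul_inv_cancel_left₀ hpos.ne']

lemma convex_cylinder (hI : Convex ℝ I) : Convex ℝ (solidOfRevolution n I 1) := by
  have hslab : Convex ℝ {z : EuclideanSpace ℝ (Fin n) | z 0 ∈ I} :=
    hI.linear_preimage (EuclideanSpace.proj (0 : Fin n) : _ →L[ℝ] ℝ).toLinearMap
  have hball : Convex ℝ {z : EuclideanSpace ℝ (Fin n) | radial z < 1} := by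
    simpa using convexOn_radial.convex_lt 1
  exact hslab.inter hball

lemma exists_isLipschitzCurveIn_solidOfRevolution (hI : Convex ℝ I) (hφ : ContDiffOn ℝ 1 φ I)
    (hφ' : ∀ x ∈ I, 0 < φ x) (hz : z ∈ solidOfRevolution n I φ)
    (hw : w ∈ solidOfRevolution n I φ) :
    ∃ γ, IsLipschitzCurveIn (solidOfRevolution n I φ) z w γ := by
  rw [← stretch_image_cylinder hφ'] at hz hw ⊢
  obtain ⟨z', hz', rfl⟩ := hz
  obtain ⟨w', hw', rfl⟩ := hw
  exact exists_isLipschitzCurveIn_image (convex_cylinder hI)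
    ((contDiffOn_stretch hφ).mono fun _ h => h.1) hz' hw'

theorem sub_le_qhDist_solidOfRevolution (hn : 2 ≤ n) (hI : IsOpen I) (hI' : Convex ℝ I)
    (hφ : ContDiffOn ℝ 1 φ I) (hφ' : ∀ x ∈ I, 0 < φ x)
    (hF : ∀ x ∈ I, HasDerivAt F (φ x)⁻¹ x) (hz : z ∈ solidOfRevolution n I φ)
    (hw : w ∈ solidOfRevolution n I φ) :
    F (w 0) - F (z 0) ≤ qhDist (solidOfRevolution n I φ) z w := by
  let axis : EuclideanSpace ℝ (Fin n) →L[ℝ] ℝ := EuclideanSpace.proj 0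
  have haxis : ‖axis‖ ≤ 1 :=
    axis.opNorm_le_bound zero_le_one fun x => by
      rw [one_mul]; exact PiLp.norm_apply_le x 0
  have hopen := isOpen_solidOfRevolution (n := n) hI hφ.continuousOn
  have hne := solidOfRevolution_ne_univ (I := I) hn (hφ' _ hz.1).le
  have hderiv : ∀ x ∈ solidOfRevolution n I φ,
      HasFDerivAt (F ∘ axis) ((φ (x 0))⁻¹ • axis) x := fun x hx =>
    (hF _ hx.1).comp_hasFDerivAt x axis.hasFDerivAt
  refine sub_le_qhDist (u := F ∘ axis) hopen hne
    (fun x hx => (hderiv x hx).differentiableAt.differentiableWithinAt) (fun x hx => ?_)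
    (exists_isLipschitzCurveIn_solidOfRevolution hI' hφ hφ' hz hw)
  have hpos := hφ' _ hx.1
  calc ‖fderiv ℝ (F ∘ axis) x‖ = (φ (x 0))⁻¹ * ‖axis‖ := by
        rw [(hderiv x hx).fderiv, norm_smul, Real.norm_of_nonneg (inv_pos.2 hpos).le]
    _ ≤ (φ (x 0))⁻¹ := mul_le_of_le_one_right (inv_pos.2 hpos).le haxis
    _ ≤ (infDist x (frontier (solidOfRevolution n I φ)))⁻¹ :=
        inv_anti₀ (infDist_frontier_pos hopen hne hx) (infDist_frontier_solidOfRevolution_le hn hx)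

lemma measurePreserving_apply_zero_offAxis :
    MeasurePreserving fun z : EuclideanSpace ℝ (Fin n) => (z 0, offAxis z) := by
  have hsplit : MeasurePreserving
      (MeasurableEquiv.piEquivPiSubtypeProd (fun _ : Fin n => ℝ) (· = 0)) := by
    convert volume_preserving_piEquivPiSubtypeProd (fun _ : Fin n => ℝ) (· = 0)
  have haxis : MeasurePreserving (MeasurableEquiv.funUnique {i : Fin n // i = 0} ℝ) := by
    convert! volume_preserving_funUnique {i : Fin n // i = 0} ℝ
  have hprod := haxis.prod (PiLp.volume_preserving_toLp {i : Fin n // i ≠ 0})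
  exact (hprod.comp hsplit).comp (PiLp.volume_preserving_ofLp (Fin n))

theorem setLIntegral_solidOfRevolution (hI : MeasurableSet I) (hφ : Measurable φ)
    (hφ' : ∀ x ∈ I, 0 < φ x) {f : ℝ → ℝ≥0∞} (hf : Measurable f) :
    ∫⁻ z in solidOfRevolution n I φ, f (z 0) =
      (∫⁻ x in I, f x * ENNReal.ofReal (φ x ^ (n - 1))) *
        volume (ball (0 : EuclideanSpace ℝ {i : Fin n // i ≠ 0}) 1) := by
  let S : Set (ℝ × EuclideanSpace ℝ {i : Fin n // i ≠ 0}) := {p | p.1 ∈ I ∧ ‖p.2‖ < φ p.1}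
  have hS : MeasurableSet S :=
    (measurable_fst hI).inter (measurableSet_lt measurable_snd.norm (hφ.comp measurable_fst))
  have hpre : solidOfRevolution n I φ = (fun z => (z 0, offAxis z)) ⁻¹' S := by
    ext z
    simp only [solidOfRevolution, radial_eq_norm_offAxis, S, mem_ofPred_eq, mem_preimage]
  have hdim : finrank ℝ (EuclideanSpace ℝ {i : Fin n // i ≠ 0}) = n - 1 := by simp
  have hsection : ∀ x, ∫⁻ y, S.indicator (fun p => f p.1) (x, y) =
      I.indicator (fun x => f x * ENNReal.ofReal (φ x ^ (n - 1)) *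
        volume (ball (0 : EuclideanSpace ℝ {i : Fin n // i ≠ 0}) 1)) x := by
    intro x
    by_cases hx : x ∈ I
    · have hball : Prod.mk x ⁻¹' S = ball 0 (φ x) := by ext y; simp [S, hx]
      calc ∫⁻ y, S.indicator (fun p => f p.1) (x, y)
          = ∫⁻ y, (Prod.mk x ⁻¹' S).indicator (fun _ => f x) y := rfl
        _ = f x * volume (ball (0 : EuclideanSpace ℝ {i : Fin n // i ≠ 0}) (φ x)) := by
            rw [hball, lintegral_indicator_const measurableSet_ball]
        _ = _ := by
            rw [Measure.addHaar_ball_of_pos _ _ (hφ' x hx), hdim, indicator_of_mem hx, mul_assoc]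
    · simp [S, hx]
  have hcoords := measurePreserving_apply_zero_offAxis.setLIntegral_comp_preimage hS
    (hf.comp measurable_fst)
  simp only [Function.comp_apply] at hcoords
  rw [hpre, hcoords, ← lintegral_indicator hS, Measure.volume_eq_prod,
    lintegral_prod _ (Measurable.indicator (f := fun p => f p.1) (by fun_prop) hS).aemeasurable]
  simp_rw [hsection]
  rw [lintegral_indicator hI, lintegral_mul_const]
  fun_prop

end SolidOfRevolution

section Cusp

lemma setLIntegral_Ioo_rpow_eq_top {δ p : ℝ} (hδ : 0 < δ) (hp : p ≤ -1) :
    ∫⁻ x in Ioo 0 δ, ENNReal.ofReal (x ^ p) = ⊤ := by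
  by_contra hfin
  refine hp.not_gt ((intervalIntegral.integrableOn_Ioo_rpow_iff hδ).1 ⟨?_, ?_⟩)
  · exact (measurable_id.pow_const p).aestronglyMeasurable
  · rw [hasFiniteIntegral_iff_ofReal]
    · exact lt_top_iff_ne_top.2 hfin
    · filter_upwards [ae_restrict_mem measurableSet_Ioo] with x hx using Real.rpow_nonneg hx.1.le p

variable {n : ℕ} [NeZero n] {α : ℝ}

variable (n α) in
lemma cuspDomain_eq_solidOfRevolution :
    cuspDomain n α = solidOfRevolution n (Ioo 0 1) (· ^ α) :=
  ext fun _ => and_assoc.symm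

lemma solidOfRevolution_Ioo_subset_cuspDomain {δ : ℝ} (hδ : δ ≤ 1) :
    solidOfRevolution n (Ioo 0 δ) (· ^ α) ⊆ cuspDomain n α := by
  rw [cuspDomain_eq_solidOfRevolution]
  exact solidOfRevolution_mono (Ioo_subset_Ioo_right hδ)

lemma contDiffOn_rpow_const_Ioo (p δ : ℝ) : ContDiffOn ℝ 1 (fun x : ℝ => x ^ p) (Ioo 0 δ) :=
  fun _ hx => (Real.contDiffAt_rpow_const_of_ne hx.1.ne').contDiffWithinAt

variable (α) in
lemma isOpen_solidOfRevolution_rpow (δ : ℝ) :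
    IsOpen (solidOfRevolution n (Ioo 0 δ) (· ^ α)) :=
  isOpen_solidOfRevolution isOpen_Ioo (contDiffOn_rpow_const_Ioo α δ).continuousOn

lemma setLIntegral_rpow_solidOfRevolution_rpow_eq_top {δ p : ℝ} (hδ : 0 < δ)
    (hp : p + α * (n - 1) ≤ -1) :
    ∫⁻ z in solidOfRevolution n (Ioo 0 δ) (· ^ α), ENNReal.ofReal (z 0 ^ p) = ⊤ := by
  have hpow : ∀ x ∈ Ioo 0 δ, ENNReal.ofReal (x ^ p) * ENNReal.ofReal ((x ^ α) ^ (n - 1)) =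
      ENNReal.ofReal (x ^ (p + α * (n - 1))) := fun x hx => by
    rw [← ENNReal.ofReal_mul (Real.rpow_nonneg hx.1.le p), Real.rpow_add hx.1,
      Real.rpow_mul hx.1.le, ← Nat.cast_pred (NeZero.pos n), Real.rpow_natCast]
  rw [setLIntegral_solidOfRevolution measurableSet_Ioo (by fun_prop)
      (fun x hx => Real.rpow_pos_of_pos hx.1 α) (f := fun x => ENNReal.ofReal (x ^ p))
      (by fun_prop),
    setLIntegral_congr_fun measurableSet_Ioo hpow, setLIntegral_Ioo_rpow_eq_top hδ hp,
    ENNReal.top_mul (measure_ball_pos _ _ one_pos).ne']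

lemma setLIntegral_const_mul_rpow_rpow_solidOfRevolution_rpow_eq_top {c δ p s : ℝ} (hc : 0 < c)
    (hδ : 0 < δ) (hp : p * s + α * (n - 1) ≤ -1) :
    ∫⁻ z in solidOfRevolution n (Ioo 0 δ) (· ^ α), ENNReal.ofReal ((c * z 0 ^ p) ^ s) = ⊤ := by
  have hpow : ∀ z ∈ solidOfRevolution n (Ioo 0 δ) (· ^ α),
      ENNReal.ofReal ((c * z 0 ^ p) ^ s) =
        ENNReal.ofReal (c ^ s) * ENNReal.ofReal (z 0 ^ (p * s)) := fun z hz => by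
    rw [Real.mul_rpow hc.le (Real.rpow_nonneg hz.1.1.le p), ← Real.rpow_mul hz.1.1.le,
      ENNReal.ofReal_mul (Real.rpow_nonneg hc.le s)]
  rw [setLIntegral_congr_fun (isOpen_solidOfRevolution_rpow α δ).measurableSet hpow,
    lintegral_const_mul' _ _ ENNReal.ofReal_ne_top,
    setLIntegral_rpow_solidOfRevolution_rpow_eq_top hδ hp, ENNReal.mul_top]
  exact (ENNReal.ofReal_pos.2 (Real.rpow_pos_of_pos hc s)).ne'

lemma div_le_qhDist_cuspDomain (hn : 2 ≤ n) (hα : α ≠ 1) {z z₀ : EuclideanSpace ℝ (Fin n)}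
    (hz : z ∈ cuspDomain n α) (hz₀ : z₀ ∈ cuspDomain n α) :
    (z 0 ^ (1 - α) - z₀ 0 ^ (1 - α)) / (α - 1) ≤ qhDist (cuspDomain n α) z z₀ := by
  have hα' : 1 - α ≠ 0 := sub_ne_zero.2 hα.symm
  have hF : ∀ x ∈ Ioo (0 : ℝ) 1, HasDerivAt (fun x => x ^ (1 - α) / (1 - α)) (x ^ α)⁻¹ x := by
    intro x hx
    refine ((Real.hasDerivAt_rpow_const (p := 1 - α) (Or.inl hx.1.ne')).div_const _).congr_deriv ?_
    rw [mul_div_cancel_left₀ _ hα', ← Real.rpow_neg hx.1.le]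
    ring_nf
  rw [cuspDomain_eq_solidOfRevolution] at hz hz₀ ⊢
  convert sub_le_qhDist_solidOfRevolution hn isOpen_Ioo (convex_Ioo 0 1)
    (contDiffOn_rpow_const_Ioo α 1) (fun x hx => Real.rpow_pos_of_pos hx.1 α) hF hz hz₀ using 1
  rw [← sub_div, ← neg_sub (z₀ 0 ^ (1 - α)), ← neg_sub 1 α, neg_div_neg_eq]

lemma exists_mul_rpow_le_qhDist_cuspDomain (hn : 2 ≤ n) (hα : 1 < α)
    {z₀ : EuclideanSpace ℝ (Fin n)} (hz₀ : z₀ ∈ cuspDomain n α) :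
    ∃ c > 0, ∃ δ ∈ Ioc (0 : ℝ) 1, ∀ z ∈ solidOfRevolution n (Ioo 0 δ) (· ^ α),
      c * z 0 ^ (1 - α) ≤ qhDist (cuspDomain n α) z z₀ := by
  have hα' : 0 < α - 1 := sub_pos.2 hα
  have hlarge : ∀ᶠ x : ℝ in 𝓝[>] 0, 2 * z₀ 0 ^ (1 - α) ≤ x ^ (1 - α) :=
    (tendsto_rpow_neg_nhdsGT_zero (sub_neg.2 hα)).eventually_ge_atTop _
  obtain ⟨δ, hδ, hδlarge⟩ := (mem_nhdsGT_iff_exists_mem_Ioc_Ioo_subset one_pos).1 hlarge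
  refine ⟨(2 * (α - 1))⁻¹, by positivity, δ, hδ, fun z hz => ?_⟩
  have hzcusp : z ∈ cuspDomain n α := solidOfRevolution_Ioo_subset_cuspDomain hδ.2 hz
  have hz₀le : 2 * z₀ 0 ^ (1 - α) ≤ z 0 ^ (1 - α) := hδlarge hz.1
  calc (2 * (α - 1))⁻¹ * z 0 ^ (1 - α) = (z 0 ^ (1 - α) - z 0 ^ (1 - α) / 2) / (α - 1) := by
        field_simp; ring
    _ ≤ (z 0 ^ (1 - α) - z₀ 0 ^ (1 - α)) / (α - 1) := by gcongr; linarith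
    _ ≤ qhDist (cuspDomain n α) z z₀ := div_le_qhDist_cuspDomain hn hα.ne' hzcusp hz₀

end Cusp

/-- If `(α − 1)(s − n + 1) ≥ n` (with `α > 1`), the `L^s`-integral
of the quasihyperbolic distance over the cusp `Ω_α` is infinite for every base point. -/
theorem cusp_qh_integral_infinite (n : ℕ) [NeZero n] (hn : 2 ≤ n) (α : ℝ) (hα : 1 < α)
    (s : ℝ) (hs : 1 ≤ s) (hcond : (n : ℝ) ≤ (α - 1) * (s - n + 1)) :
    ∀ z₀ ∈ cuspDomain n α,
      ∫⁻ z in cuspDomain n α, ENNReal.ofReal (qhDist (cuspDomain n α) z z₀ ^ s) = ⊤ := by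
  intro z₀ hz₀
  obtain ⟨c, hc, δ, hδ, hk⟩ := exists_mul_rpow_le_qhDist_cuspDomain hn hα hz₀
  have hexp : (1 - α) * s + α * (n - 1) ≤ -1 := by linarith
  refine top_unique ?_
  calc ⊤ = ∫⁻ z in solidOfRevolution n (Ioo 0 δ) (· ^ α),
          ENNReal.ofReal ((c * z 0 ^ (1 - α)) ^ s) :=
        (setLIntegral_const_mul_rpow_rpow_solidOfRevolution_rpow_eq_top hc hδ.1 hexp).symm
    _ ≤ ∫⁻ z in solidOfRevolution n (Ioo 0 δ) (· ^ α),
          ENNReal.ofReal (qhDist (cuspDomain n α) z z₀ ^ s) :=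
        setLIntegral_mono' (isOpen_solidOfRevolution_rpow α δ).measurableSet fun z hz =>
          ENNReal.ofReal_le_ofReal <| Real.rpow_le_rpow
            (mul_nonneg hc.le (Real.rpow_nonneg hz.1.1.le _)) (hk z hz) (zero_le_one.trans hs)
    _ ≤ ∫⁻ z in cuspDomain n α, ENNReal.ofReal (qhDist (cuspDomain n α) z z₀ ^ s) :=
        lintegral_mono_set (solidOfRevolution_Ioo_subset_cuspDomain hδ.2)
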